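/- arXiv:math/0105045 — 2 statements merged into one kernel-verified Lean document; each statement's English description precedes it below -/
import Mathlib

section
/- Let X be an infinite set of real numbers and let 𝒰 be a countable large cover of X, enumerated bijectively as ⟨Uₙ : n ∈ ℕ⟩, with associated map h_𝒰 : X → P(ℕ) given by h_𝒰(x) = {n : x ∈ Uₙ}. Then: (1) 𝒰 is an ω-cover of X if and only if h_𝒰[X] is centered; (2) 𝒰 contains a γ-cover of X (as a subfamily) if and only if h_𝒰[X] has a pseudo-intersection; (3) 𝒰 is a τ-cover of X if and only if h_𝒰[X] is linearly quasiordered by ⊆*. -/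
open Set

namespace TauCoverPaper

/-- `a ⊆* b`: `a \ b` is finite. -/
def AlmostSubset (a b : Set ℕ) : Prop := (a \ b).Finite

/-- `Y` is linearly quasiordered by `⊆*`. -/
def LinQuasi (Y : Set (Set ℕ)) : Prop :=
  ∀ a ∈ Y, ∀ b ∈ Y, AlmostSubset a b ∨ AlmostSubset b a

/-- `a` is a pseudo-intersection of the family `Y`. -/
def PseudoIntersection (a : Set ℕ) (Y : Set (Set ℕ)) : Prop :=
  a.Infinite ∧ ∀ b ∈ Y, AlmostSubset a b

/-- `Y` is centered: every nonempty finite subfamily has infinite intersection. -/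
def Centered (Y : Set (Set ℕ)) : Prop :=
  ∀ F : Set (Set ℕ), F ⊆ Y → F.Finite → F.Nonempty → (⋂₀ F).Infinite

/-- A tower: a family of infinite subsets of `ℕ`, linearly quasiordered by `⊆*`,
with no pseudo-intersection. -/
def IsTower (Y : Set (Set ℕ)) : Prop :=
  (∀ a ∈ Y, a.Infinite) ∧ LinQuasi Y ∧ ¬ ∃ a, PseudoIntersection a Y

variable {α : Type}

/-- A cover of the space `α`: the union is everything, and the whole space is
not a member. -/
def IsCover (𝒰 : Set (Set α)) : Prop := ⋃₀ 𝒰 = univ ∧ univ ∉ 𝒰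

/-- A large cover: each point belongs to infinitely many members. -/
def IsLargeCover (𝒰 : Set (Set α)) : Prop :=
  IsCover 𝒰 ∧ ∀ x : α, {U ∈ 𝒰 | x ∈ U}.Infinite

/-- An ω-cover: each finite set is contained in some member. -/
def IsOmegaCover (𝒰 : Set (Set α)) : Prop :=
  IsCover 𝒰 ∧ ∀ F : Set α, F.Finite → ∃ U ∈ 𝒰, F ⊆ U

/-- A γ-cover: infinite, and each point belongs to all but finitely many members. -/
def IsGammaCover (𝒰 : Set (Set α)) : Prop :=
  IsCover 𝒰 ∧ 𝒰.Infinite ∧ ∀ x : α, {U ∈ 𝒰 | x ∉ U}.Finite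

/-- A τ-cover: a large cover such that for all `x, y`, one of the sets
`{U : x ∈ U, y ∉ U}`, `{U : y ∈ U, x ∉ U}` is finite. -/
def IsTauCover (𝒰 : Set (Set α)) : Prop :=
  IsLargeCover 𝒰 ∧ ∀ x y : α,
    {U ∈ 𝒰 | x ∈ U ∧ y ∉ U}.Finite ∨ {U ∈ 𝒰 | y ∈ U ∧ x ∉ U}.Finite

/-- A τ*-cover: a large, countably infinite cover which, enumerated bijectively
as `⟨Uₙ⟩`, admits for each point `y` an infinite `r y ⊆ {n | y ∈ Uₙ}` such that
the family `{r y}` is linearly quasiordered by `⊆*`. -/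
def IsTauStarCover (𝒰 : Set (Set α)) : Prop :=
  IsLargeCover 𝒰 ∧
  ∃ U : ℕ → Set α, Function.Injective U ∧ Set.range U = 𝒰 ∧
    ∃ r : α → Set ℕ,
      (∀ y : α, (r y).Infinite ∧ r y ⊆ {n | y ∈ U n}) ∧
      (∀ y z : α, AlmostSubset (r y) (r z) ∨ AlmostSubset (r z) (r y))

/-- Ω : countable open ω-covers. -/
def OpenOmega (α : Type) [TopologicalSpace α] : Set (Set (Set α)) :=
  {𝒰 | 𝒰.Countable ∧ (∀ U ∈ 𝒰, IsOpen U) ∧ IsOmegaCover 𝒰}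

/-- Γ : countable open γ-covers. -/
def OpenGamma (α : Type) [TopologicalSpace α] : Set (Set (Set α)) :=
  {𝒰 | 𝒰.Countable ∧ (∀ U ∈ 𝒰, IsOpen U) ∧ IsGammaCover 𝒰}

/-- T : countable open τ-covers. -/
def OpenTau (α : Type) [TopologicalSpace α] : Set (Set (Set α)) :=
  {𝒰 | 𝒰.Countable ∧ (∀ U ∈ 𝒰, IsOpen U) ∧ IsTauCover 𝒰}

/-- T* : countable open τ*-covers. -/
def OpenTauStar (α : Type) [TopologicalSpace α] : Set (Set (Set α)) :=
  {𝒰 | 𝒰.Countable ∧ (∀ U ∈ 𝒰, IsOpen U) ∧ IsTauStarCover 𝒰}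

/-- B_Ω : countable Borel ω-covers. -/
def BorelOmega (α : Type) [MeasurableSpace α] : Set (Set (Set α)) :=
  {𝒰 | 𝒰.Countable ∧ (∀ U ∈ 𝒰, MeasurableSet U) ∧ IsOmegaCover 𝒰}

/-- B_Γ : countable Borel γ-covers. -/
def BorelGamma (α : Type) [MeasurableSpace α] : Set (Set (Set α)) :=
  {𝒰 | 𝒰.Countable ∧ (∀ U ∈ 𝒰, MeasurableSet U) ∧ IsGammaCover 𝒰}

/-- B_T : countable Borel τ-covers. -/
def BorelTau (α : Type) [MeasurableSpace α] : Set (Set (Set α)) :=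
  {𝒰 | 𝒰.Countable ∧ (∀ U ∈ 𝒰, MeasurableSet U) ∧ IsTauCover 𝒰}

/-- The selection principle S₁(𝔘,𝔙). -/
def S1 (𝔘 𝔙 : Set (Set (Set α))) : Prop :=
  ∀ 𝒰 : ℕ → Set (Set α), (∀ n, 𝒰 n ∈ 𝔘) →
    ∃ V : ℕ → Set α, (∀ n, V n ∈ 𝒰 n) ∧ Set.range V ∈ 𝔙

/-- The selection principle Sfin(𝔘,𝔙). -/
def Sfin (𝔘 𝔙 : Set (Set (Set α))) : Prop :=
  ∀ 𝒰 : ℕ → Set (Set α), (∀ n, 𝒰 n ∈ 𝔘) →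
    ∃ F : ℕ → Set (Set α), (∀ n, (F n).Finite ∧ F n ⊆ 𝒰 n) ∧ (⋃ n, F n) ∈ 𝔙

/-- The selection principle Ufin(𝔘,𝔙). -/
def Ufin (𝔘 𝔙 : Set (Set (Set α))) : Prop :=
  ∀ 𝒰 : ℕ → Set (Set α), (∀ n, 𝒰 n ∈ 𝔘) →
    (∀ n, ¬ ∃ F : Set (Set α), F ⊆ 𝒰 n ∧ F.Finite ∧ ⋃₀ F = univ) →
    ∃ F : ℕ → Set (Set α), (∀ n, (F n).Finite ∧ F n ⊆ 𝒰 n) ∧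
      Set.range (fun n => ⋃₀ (F n)) ∈ 𝔙

/-- binom(𝔘,𝔙): each member of 𝔘 contains a subfamily belonging to 𝔙. -/
def Binom (𝔘 𝔙 : Set (Set (Set α))) : Prop :=
  ∀ 𝒰 ∈ 𝔘, ∃ 𝒱 ⊆ 𝒰, 𝒱 ∈ 𝔙

/-- Borel measurability of a map into `P(ℕ)` (identified with the Cantor
space via characteristic functions): each coordinate is measurable. -/
def BorelMeasSets {β : Type} [MeasurableSpace β] (f : β → Set ℕ) : Prop :=
  ∀ n : ℕ, MeasurableSet {x | n ∈ f x}

/-- The excluded middle property for a family `Y ⊆ ℕ^ℕ`. -/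
def ExcludedMiddleProp (Y : Set (ℕ → ℕ)) : Prop :=
  ∃ g : ℕ → ℕ,
    (∀ f ∈ Y, {n | f n < g n}.Infinite) ∧
    ∀ f ∈ Y, ∀ h ∈ Y,
      {n | f n < g n ∧ g n ≤ h n}.Finite ∨ {n | h n < g n ∧ g n ≤ f n}.Finite

/-- non(J): the minimal cardinality of a set of reals not satisfying `J`. -/
noncomputable def nonCard (J : Set ℝ → Prop) : Cardinal :=
  sInf {c : Cardinal | ∃ X : Set ℝ, ¬ J X ∧ Cardinal.mk ↥X = c}

/-- add(J): the minimal cardinality of a family of sets of reals, each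
satisfying `J`, whose union does not satisfy `J`. -/
noncomputable def addCard (J : Set ℝ → Prop) : Cardinal :=
  sInf {c : Cardinal | ∃ 𝔉 : Set (Set ℝ),
    (∀ A ∈ 𝔉, J A) ∧ ¬ J (⋃₀ 𝔉) ∧ Cardinal.mk ↥𝔉 = c}

/-- 𝔱 : the minimal cardinality of a tower. -/
noncomputable def towerCard : Cardinal :=
  sInf {c : Cardinal | ∃ Y : Set (Set ℕ), IsTower Y ∧ Cardinal.mk ↥Y = c}

/-- For a countable large cover `𝒰 = {Uₙ}` of `X` (enumerated bijectively)
with `h_𝒰(x) = {n : x ∈ Uₙ}`: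
(1) `𝒰` is an ω-cover iff `h_𝒰[X]` is centered;
(2) `𝒰` contains a γ-cover iff `h_𝒰[X]` has a pseudo-intersection;
(3) `𝒰` is a τ-cover iff `h_𝒰[X]` is linearly quasiordered by `⊆*`. -/
theorem statement7 (X : Set ℝ) (hX : X.Infinite) (U : ℕ → Set ↥X)
    (hinj : Function.Injective U) (hlarge : IsLargeCover (Set.range U)) :
    (IsOmegaCover (Set.range U) ↔
      Centered (Set.range fun x : ↥X => {n | x ∈ U n})) ∧
    ((∃ 𝒱 ⊆ Set.range U, IsGammaCover 𝒱) ↔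
      ∃ a : Set ℕ, PseudoIntersection a (Set.range fun x : ↥X => {n | x ∈ U n})) ∧
    (IsTauCover (Set.range U) ↔
      LinQuasi (Set.range fun x : ↥X => {n | x ∈ U n})) := by
  have key : ∀ P : Set ↥X → Prop, {V ∈ Set.range U | P V}.Finite ↔ {n | P (U n)}.Finite := by
    intro P
    have : {V ∈ Set.range U | P V} = U '' {n | P (U n)} := by
      ext V
      constructor
      · rintro ⟨⟨n, rfl⟩, h⟩
        exact ⟨n, h, rfl⟩
      · rintro ⟨n, h, rfl⟩
        exact ⟨⟨n, rfl⟩, h⟩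
    rw [this]
    exact Set.finite_image_iff hinj.injOn
  have hne : ∀ n, ∃ x, x ∉ U n := by
    intro n
    by_contra! h
    exact hlarge.1.2 ⟨n, Set.eq_univ_of_forall h⟩
  refine ⟨⟨?_, ?_⟩, ⟨?_, ?_⟩, ⟨?_, ?_⟩⟩
  · rintro ⟨_, hω⟩ F hF hfin _ hI
    choose p hp using hne
    haveI : Nonempty ↥X := ⟨p 0⟩
    choose! q hq using hF
    obtain ⟨V, ⟨m, rfl⟩, hm⟩ := hω (q '' F ∪ p '' (⋂₀ F)) ((hfin.image _).union (hI.image _))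
    refine hp m (hm (Or.inr ⟨m, ?_, rfl⟩))
    intro b hb
    rw [← hq hb]
    exact hm (Or.inl ⟨b, hb, rfl⟩)
  · intro hC
    refine ⟨hlarge.1, fun F hF => ?_⟩
    rcases F.eq_empty_or_nonempty with rfl | hFn
    · exact ⟨U 0, ⟨0, rfl⟩, Set.empty_subset _⟩
    · have h := hC ((fun x : ↥X => {n | x ∈ U n}) '' F) (Set.image_subset_range _ _)
        (hF.image _) (hFn.image _)
      obtain ⟨n, hn⟩ := h.nonempty
      exact ⟨U n, ⟨n, rfl⟩, fun x hx => hn _ ⟨x, hx, rfl⟩⟩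
  · rintro ⟨V, hV, _, hinf, hfin⟩
    refine ⟨U ⁻¹' V, hinf.preimage hV, ?_⟩
    rintro _ ⟨x, rfl⟩
    refine ((hfin x).preimage hinj.injOn).subset ?_
    rintro n ⟨h1, h2⟩
    exact ⟨h1, h2⟩
  · rintro ⟨a, ha, hb⟩
    refine ⟨U '' a, Set.image_subset_range _ _, ⟨?_, ?_⟩, ha.image hinj.injOn, ?_⟩
    · refine Set.eq_univ_of_forall fun x => ?_
      obtain ⟨n, hn, hn'⟩ := (ha.sdiff (hb _ ⟨x, rfl⟩)).nonempty
      have hx : x ∈ U n := by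
        by_contra h
        exact hn' ⟨hn, h⟩
      exact ⟨U n, ⟨n, hn, rfl⟩, hx⟩
    · rintro ⟨n, _, h⟩
      exact hlarge.1.2 ⟨n, h⟩
    · intro x
      refine ((hb _ ⟨x, rfl⟩).image U).subset ?_
      rintro _ ⟨⟨n, hn, rfl⟩, hx⟩
      exact ⟨n, ⟨hn, hx⟩, rfl⟩
  · rintro ⟨_, h⟩ _ ⟨x, rfl⟩ _ ⟨y, rfl⟩
    exact (h x y).imp (key fun V => x ∈ V ∧ y ∉ V).1 (key fun V => y ∈ V ∧ x ∉ V).1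
  · intro h
    refine ⟨hlarge, fun x y => ?_⟩
    exact (h _ ⟨x, rfl⟩ _ ⟨y, rfl⟩).imp (key fun V => x ∈ V ∧ y ∉ V).2
      (key fun V => y ∈ V ∧ x ∉ V).2

end TauCoverPaper
end

section
/- Assume the continuum hypothesis (2^ℵ₀ = ℵ₁). Then there exist sets of real numbers A and B, each satisfying S₁(B_Ω,B_Γ), such that A ∪ B does not satisfy binom(Ω,T) (that is, A ∪ B has a countable open ω-cover containing no τ-cover of A ∪ B). In particular, S₁(T,Γ) ≠ S₁(Ω,Γ) and S₁(B_T,B_Γ) ≠ S₁(B_Ω,B_Γ) as properties of sets of reals. -/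
open Set

namespace TauCoverPaper

variable {α : Type}

/-! ### Silver cubes in the Cantor space -/

abbrev Cs : Type := ℕ → Bool

theorem exists_cyl {O : Set Cs} (hO : IsOpen O) {x : Cs} (hx : x ∈ O) :
    ∃ l : ℕ, ∀ y : Cs, (∀ j < l, y j = x j) → y ∈ O := by
  obtain ⟨u, ⟨z, n, rfl⟩, hxu, huO⟩ :=
    (PiNat.isTopologicalBasis_cylinders (fun _ : ℕ => Bool)).exists_subset_of_mem_open hx hO
  refine ⟨n, fun y hy => huO ?_⟩
  rw [PiNat.mem_cylinder_iff] at hxu ⊢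
  intro i hi
  rw [hy i hi, hxu i hi]

/-- Coordinatewise exclusive or with `s`. -/
def xorMap (s x : Cs) : Cs := fun j => xor (x j) (s j)

theorem xorMap_xorMap (s x : Cs) : xorMap s (xorMap s x) = x := by
  funext j; simp [xorMap]

theorem continuous_xorMap (s : Cs) : Continuous (xorMap s) := by
  refine continuous_pi fun j => ?_
  have : Continuous (fun b : Bool => xor b (s j)) := continuous_of_discreteTopology
  exact this.comp (continuous_apply j)

def xorHomeo (s : Cs) : Cs ≃ₜ Cs where
  toFun := xorMap s
  invFun := xorMap s
  left_inv := xorMap_xorMap s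
  right_inv := xorMap_xorMap s
  continuous_toFun := continuous_xorMap s
  continuous_invFun := continuous_xorMap s

/-- Elements supported below `l`. -/
def supp (l : ℕ) : Set Cs := {s | ∀ j, l ≤ j → s j = false}

theorem supp_finite (l : ℕ) : (supp l).Finite := by
  have : Set.InjOn (fun (s : Cs) (i : Fin l) => s i) (supp l) := by
    intro s hs t ht h
    funext j
    by_cases hj : j < l
    · exact congrFun h ⟨j, hj⟩
    · rw [hs j (by omega), ht j (by omega)]
  exact Set.Finite.of_finite_image (Set.toFinite _) this

theorem pattern {O : Set Cs} (hO : IsOpen O) (hd : Dense O) (l : ℕ) :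
    ∃ (l' : ℕ) (p : Cs), ∀ y : Cs, (∀ j, l ≤ j → j < l' → y j = p j) → y ∈ O := by
  have hopen : ∀ s : Cs, IsOpen (xorMap s ⁻¹' O) := fun s => hO.preimage (continuous_xorMap s)
  have hdense : ∀ s : Cs, Dense (xorMap s ⁻¹' O) := fun s =>
    hd.preimage (xorHomeo s).isOpenMap
  have h1 : Dense (⋂ s ∈ supp l, xorMap s ⁻¹' O) :=
    dense_biInter_of_isOpen (fun s _ => hopen s) (supp_finite l).countable (fun s _ => hdense s)
  have h2 : IsOpen (⋂ s ∈ supp l, xorMap s ⁻¹' O) :=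
    (supp_finite l).isOpen_biInter (fun s _ => hopen s)
  obtain ⟨y0, hy0⟩ := h1.nonempty
  obtain ⟨l', hl'⟩ := exists_cyl h2 hy0
  refine ⟨l', y0, fun y hy => ?_⟩
  let s : Cs := fun j => if j < l then xor (y j) (y0 j) else false
  have hs : s ∈ supp l := by
    intro j hj
    simp [s, not_lt.2 hj]
  have h3 := hl' (xorMap s y) (by
    intro j hj
    by_cases hjl : j < l
    · simp [xorMap, s, hjl]
    · simp [xorMap, s, hjl, hy j (by omega) hj])
  simp only [mem_iInter, mem_preimage] at h3
  have := h3 s hs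
  rwa [xorMap_xorMap] at this

theorem glue {β : Type} (M : ℕ → ℕ) (hM : StrictMono M) (p : ℕ → ℕ → β) :
    ∃ v : ℕ → β, ∀ n j, M n ≤ j → j < M (n + 1) → v j = p n j := by
  refine ⟨fun j => p (Nat.findGreatest (fun n => M n ≤ j) j) j, fun n j h1 h2 => ?_⟩
  have : Nat.findGreatest (fun n => M n ≤ j) j = n := by
    apply le_antisymm
    · by_contra hlt
      push Not at hlt
      have h3 : M (Nat.findGreatest (fun n => M n ≤ j) j) ≤ j :=
        Nat.findGreatest_spec (P := fun n => M n ≤ j) (m := n) (le_trans (hM.id_le n) h1) h1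
      have := hM.monotone (show n + 1 ≤ _ from hlt)
      omega
    · exact Nat.le_findGreatest (le_trans (hM.id_le n) h1) h1
  simp only [this]

theorem exists_block (M : ℕ → ℕ) (hM : StrictMono M) (j : ℕ) (i : ℕ) (h : M i ≤ j) :
    ∃ n, i ≤ n ∧ M n ≤ j ∧ j < M (n + 1) := by
  have h0 : ∃ k, j < M (i + k + 1) := ⟨j, by have := hM.id_le (i + j + 1); simp at this; omega⟩
  classical
  refine ⟨i + Nat.find h0, by omega, ?_, Nat.find_spec h0⟩
  rcases hk : Nat.find h0 with _ | k
  · simpa using h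
  · have := Nat.find_min h0 (m := k) (by omega)
    push Not at this
    rw [show i + (k + 1) = i + k + 1 by omega]
    exact this

theorem exists_rec (P : ℕ → ℕ → ℕ → Prop) (m0 : ℕ) (h : ∀ n m, ∃ m', P n m m') :
    ∃ M : ℕ → ℕ, M 0 = m0 ∧ ∀ n, P n (M n) (M (n + 1)) := by
  choose f hf using h
  exact ⟨fun n => Nat.rec m0 (fun n m => f n m) n, rfl, fun n => hf _ _⟩

/-- A condition: free coordinates and values. -/
abbrev Nd : Type := Set ℕ × Cs

def le (m : ℕ) (p q : Nd) : Prop :=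
  ∀ j, m ≤ j → (j ∈ p.1 → j ∈ q.1) ∧ (j ∉ q.1 → p.2 j = q.2 j)

theorem le_refl (m : ℕ) (p : Nd) : le m p p := fun _ _ => ⟨id, fun _ => rfl⟩

theorem le_mono {m n : ℕ} (h : m ≤ n) {p q : Nd} (hp : le m p q) : le n p q :=
  fun j hj => hp j (h.trans hj)

theorem le_trans' {m : ℕ} {p q r : Nd} (h1 : le m p q) (h2 : le m q r) : le m p r := by
  intro j hj
  refine ⟨fun h => (h2 j hj).1 ((h1 j hj).1 h), fun h => ?_⟩
  have hq : j ∉ q.1 := fun h' => h ((h2 j hj).1 h')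
  rw [(h1 j hj).2 hq, (h2 j hj).2 h]

def les (p q : Nd) : Prop := ∃ m, le m p q

theorem les_refl (p : Nd) : les p p := ⟨0, le_refl 0 p⟩

theorem les_trans {p q r : Nd} : les p q → les q r → les p r := by
  rintro ⟨m, hm⟩ ⟨n, hn⟩
  exact ⟨max m n, le_trans' (le_mono (le_max_left _ _) hm) (le_mono (le_max_right _ _) hn)⟩

def cube (p : Nd) : Set Cs := {x | ∀ j, j ∉ p.1 → x j = p.2 j}

def cst (p : Nd) : Set Cs := {x | ∃ m, ∀ j, m ≤ j → j ∉ p.1 → x j = p.2 j}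

theorem cube_sub_cst (p : Nd) : cube p ⊆ cst p := fun _ hx => ⟨0, fun j _ => hx j⟩

theorem cst_mono {p q : Nd} (h : les p q) : cst p ⊆ cst q := by
  rintro x ⟨m, hm⟩
  obtain ⟨n, hn⟩ := h
  refine ⟨max m n, fun j hj hjq => ?_⟩
  have hn' := hn j (le_trans (le_max_right _ _) hj)
  rw [hm j (le_trans (le_max_left _ _) hj) (fun h' => hjq (hn'.1 h')), hn'.2 hjq]

/-- Fusion. -/
theorem fusion (p : ℕ → Nd) (M : ℕ → ℕ) (hM : StrictMono M)
    (hle : ∀ n, ∀ i ≤ n, le (M n) (p n) (p i))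
    (he : ∀ n, ∃ e ∈ (p n).1, M n ≤ e ∧ e < M (n + 1)) :
    ∃ q : Nd, q.1.Infinite ∧ ∀ i, le (M i) q (p i) := by
  choose e he1 he2 he3 using he
  obtain ⟨v, hv⟩ := glue M hM (fun n => (p n).2)
  have hmono : StrictMono e := strictMono_nat_of_lt_succ fun n => (he3 n).trans_le (he2 (n + 1))
  refine ⟨(range e, v), Set.infinite_range_of_injective hmono.injective, fun i j hj => ?_⟩
  obtain ⟨n, hin, h1, h2⟩ := exists_block M hM j i hj
  refine ⟨?_, fun h => ?_⟩
  · rintro ⟨k, rfl⟩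
    have hik : i ≤ k := by
      by_contra hlt
      have := he3 k
      have := hM.monotone (show k + 1 ≤ i by omega)
      omega
    exact (hle k i hik (e k) (he2 k)).1 (he1 k)
  · show v j = _
    rw [hv n j h1 h2]
    exact (hle n i hin j h1).2 h

/-- Every countable decreasing sequence of conditions has a lower bound. -/
theorem lower_bound (p : ℕ → Nd) (hinf : ∀ n, (p n).1.Infinite)
    (hle : ∀ n, ∀ i ≤ n, les (p n) (p i)) :
    ∃ q : Nd, q.1.Infinite ∧ ∀ i, les q (p i) := by
  have hN : ∀ n, ∃ N, ∀ i ≤ n, le N (p n) (p i) := by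
    intro n
    choose! f hf using hle n
    refine ⟨(Finset.range (n + 1)).sup f, fun i hi => le_mono ?_ (hf i hi)⟩
    exact Finset.le_sup (f := f) (by simp; omega)
  choose N hN using hN
  obtain ⟨M, hM0, hM⟩ := exists_rec
    (fun n m m' => m < m' ∧ N (n + 1) ≤ m' ∧ ∃ e ∈ (p n).1, m ≤ e ∧ e < m') (N 0) (by
      intro n m
      obtain ⟨e, he, hme⟩ := (hinf n).exists_gt m
      exact ⟨max (e + 1) (N (n + 1)), by omega, by omega, e, he, by omega, by omega⟩)
  obtain ⟨q, hq, hq'⟩ := fusion p M (strictMono_nat_of_lt_succ fun n => (hM n).1) (by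
    intro n i hi
    refine le_mono ?_ (hN n i hi)
    cases n with
    | zero => omega
    | succ n => exact (hM n).2.1) (fun n => (hM n).2.2)
  exact ⟨q, hq, fun i => ⟨_, hq' i⟩⟩

/-- A set which is comeagre somewhere contains a cube with free coordinates in `Z`. -/
theorem cube_in_comeagre {D u : Set Cs} (hu : IsOpen u) (hne : u.Nonempty)
    (hD : D =ᶠ[residual Cs] u) {Z : Set ℕ} (hZ : Z.Infinite) :
    ∃ q : Nd, q.1.Infinite ∧ q.1 ⊆ Z ∧ cube q ⊆ D := by
  obtain ⟨t0, ht0⟩ := hne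
  obtain ⟨l0, hl0⟩ := exists_cyl hu ht0
  obtain ⟨t, ht, htG, htd⟩ := mem_residual.1 hD
  obtain ⟨O, hO, rfl⟩ := htG.eq_iInter_nat
  have hOd : ∀ n, Dense (O n) := fun n => htd.mono (iInter_subset _ _)
  choose l' pt hpt using fun n l => pattern (hO n) (hOd n) l
  obtain ⟨M, hM0, hM⟩ := exists_rec
    (fun n m m' => ∃ e ∈ Z, m ≤ e ∧ e < m' ∧ l' n (e + 1) ≤ m') l0 (by
      intro n m
      obtain ⟨e, he, hme⟩ := hZ.exists_gt m
      exact ⟨max (e + 1) (l' n (e + 1)), e, he, by omega, by omega, by omega⟩)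
  choose e heZ he1 he2 he3 using hM
  have hMs : StrictMono M := strictMono_nat_of_lt_succ fun n => (he1 n).trans_lt (he2 n)
  obtain ⟨v, hv⟩ := glue M hMs (fun n => pt n (e n + 1))
  have hmono : StrictMono e := strictMono_nat_of_lt_succ fun n => (he2 n).trans_le (he1 (n + 1))
  have hMle : ∀ n, l0 ≤ M n := fun n => hM0 ▸ hMs.monotone (Nat.zero_le n)
  refine ⟨(range e, fun j => if j < l0 then t0 j else v j),
    Set.infinite_range_of_injective hmono.injective, ?_, fun y hy => ?_⟩
  · rintro _ ⟨n, rfl⟩; exact heZ n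
  · have hyO : y ∈ ⋂ n, O n := by
      refine mem_iInter.2 fun n => hpt n (e n + 1) y fun j hj1 hj2 => ?_
      have hn : j ∉ range e := by
        rintro ⟨k, rfl⟩
        have h1 : n < k := hmono.lt_iff_lt.1 (show e n < e k by omega)
        have h2 := hMs.monotone (show n + 1 ≤ k from h1)
        have := he1 k
        have := he3 n
        omega
      have := hy j hn
      have h4 := he1 n
      have h5 := hMle n
      have h6 := he3 n
      rw [this]
      simp only [if_neg (show ¬ j < l0 by omega)]
      exact hv n j (by omega) (by omega)
    have h1 : (y ∈ D) = (y ∈ u) := ht hyO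
    rw [h1]
    refine hl0 y fun j hj => ?_
    have hn : j ∉ range e := by
      rintro ⟨k, rfl⟩
      have := he1 k
      have := hMle k
      omega
    have := hy j hn
    simpa [hj] using this

/-! ### One step of the construction -/

def near (x : Cs) : Set Cs := {y | ∃ m, ∀ j, m ≤ j → y j = x j}

def nearm (m : ℕ) (x : Cs) : Set Cs := {y | ∀ j, m ≤ j → y j = x j}

theorem nearm_eq (m : ℕ) (x : Cs) : nearm m x = (fun s => xorMap s x) '' supp m := by
  ext y
  constructor
  · intro hy
    refine ⟨xorMap x y, fun j hj => ?_, ?_⟩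
    · simp [xorMap, hy j hj]
    · funext j
      simp only [xorMap]
      cases x j <;> cases y j <;> rfl
  · rintro ⟨s, hs, rfl⟩ j hj
    simp [xorMap, hs j hj]

theorem nearm_finite (m : ℕ) (x : Cs) : (nearm m x).Finite := by
  rw [nearm_eq]; exact (supp_finite m).image _

theorem near_eq (x : Cs) : near x = ⋃ m, nearm m x := by
  ext y; simp [near, nearm]

theorem near_countable (x : Cs) : (near x).Countable := by
  rw [near_eq]
  exact countable_iUnion fun m => (nearm_finite m x).countable

theorem near_symm {x y : Cs} (h : x ∈ near y) : y ∈ near x := by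
  obtain ⟨m, hm⟩ := h
  exact ⟨m, fun j hj => (hm j hj).symm⟩

open Classical in
noncomputable def psi (p : Nd) (w : Cs) : Cs := fun j => if j ∈ p.1 then w j else p.2 j

theorem psi_mem (p : Nd) (w : Cs) : psi p w ∈ cube p := by
  intro j hj; simp [psi, hj]

theorem continuous_psi (p : Nd) : Continuous (psi p) := by
  refine continuous_pi fun j => ?_
  by_cases hj : j ∈ p.1
  · simpa [psi, hj] using continuous_apply j
  · simpa [psi, hj] using continuous_const

theorem fiber_meagre {p : Nd} (hp : p.1.Infinite) (c : Cs) : IsMeagre {w | psi p w = c} := by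
  apply IsNowhereDense.isMeagre
  rw [IsClosed.isNowhereDense_iff (isClosed_eq (continuous_psi p) continuous_const)]
  rw [Set.eq_empty_iff_forall_notMem]
  intro w hw
  obtain ⟨l, hl⟩ := exists_cyl isOpen_interior hw
  obtain ⟨e, he, hle⟩ := hp.exists_gt l
  have h1 : w ∈ {y | psi p y = c} := interior_subset hw
  have h2 : Function.update w e (!(w e)) ∈ {y | psi p y = c} := interior_subset (hl _ (by
    intro j hj
    rw [Function.update_of_ne (by omega)]))
  have h1' : psi p w = c := h1
  have h2' : psi p (Function.update w e (!(w e))) = c := h2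
  have := congrFun (h1'.trans h2'.symm) e
  simp [psi, he] at this

theorem bad_meagre {p : Nd} (hp : p.1.Infinite) {R : Set Cs} (hR : R.Countable) :
    IsMeagre {w | ∃ r ∈ R, r ∈ near (psi p w)} := by
  have : {w | ∃ r ∈ R, r ∈ near (psi p w)} =
      ⋃ r ∈ R, ⋃ c ∈ near r, {w | psi p w = c} := by
    ext w
    simp only [mem_ofPred_eq, mem_iUnion, exists_prop]
    constructor
    · rintro ⟨r, hr, h⟩
      exact ⟨r, hr, _, near_symm h, rfl⟩
    · rintro ⟨r, hr, c, hc, rfl⟩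
      exact ⟨r, hr, near_symm hc⟩
  rw [this]
  exact isMeagre_biUnion hR fun r _ => isMeagre_biUnion (near_countable r) fun c _ =>
    fiber_meagre hp c

theorem avoid {p : Nd} (hp : p.1.Infinite) {R : Set Cs} (hR : R.Countable) :
    ∃ x ∈ cst p, x ∉ R := by
  have h := bad_meagre hp hR
  obtain ⟨w, hw⟩ : ∃ w, w ∉ {w | ∃ r ∈ R, r ∈ near (psi p w)} := by
    by_contra hcon
    push Not at hcon
    exact not_isMeagre_of_isOpen isOpen_univ univ_nonempty
      (h.mono (fun w _ => hcon w))
  exact ⟨psi p w, cube_sub_cst _ (psi_mem p w), fun hx => hw ⟨_, hx, 0, fun j _ => rfl⟩⟩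

theorem one_step {p : Nd} (hp : p.1.Infinite) {F R : Set Cs} (hR : R.Countable)
    (U : ℕ → Set Cs) (hU : ∀ k, MeasurableSet (U k)) (m : ℕ)
    (H : ∀ x ∈ cst p, (∀ r ∈ R, r ∉ near x) → ∃ k, F ∪ nearm m x ⊆ U k) :
    ∃ q : Nd, q.1.Infinite ∧ le 0 q p ∧ ∃ k, F ⊆ U k ∧ ∀ x ∈ cube q, nearm m x ⊆ U k := by
  let D : ℕ → Set Cs := fun k => {w | F ∪ nearm m (psi p w) ⊆ U k}
  have hDm : ∀ k, MeasurableSet (D k) := by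
    intro k
    by_cases hF : F ⊆ U k
    · have : D k = ⋂ s ∈ supp m, (fun w => xorMap s (psi p w)) ⁻¹' (U k) := by
        ext w
        simp only [D, mem_ofPred_eq, union_subset_iff, hF, true_and, nearm_eq, image_subset_iff,
          mem_iInter, mem_preimage]
        rfl
      rw [this]
      exact MeasurableSet.biInter (supp_finite m).countable fun s _ =>
        ((continuous_xorMap s).comp (continuous_psi p)).measurable (hU k)
    · have : D k = ∅ := by
        ext w
        simp [D, hF]
      rw [this]
      exact MeasurableSet.empty
  have hk : ∃ k, ¬ IsMeagre (D k) := by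
    by_contra hcon
    push Not at hcon
    refine not_isMeagre_of_isOpen isOpen_univ univ_nonempty
      (((isMeagre_iUnion hcon).union (bad_meagre hp hR)).mono fun w _ => ?_)
    by_cases hw : w ∈ {w | ∃ r ∈ R, r ∈ near (psi p w)}
    · exact Or.inr hw
    · left
      obtain ⟨k, hk⟩ := H (psi p w) (cube_sub_cst _ (psi_mem p w))
        (fun r hr h => hw ⟨r, hr, h⟩)
      exact mem_iUnion.2 ⟨k, hk⟩
  obtain ⟨k, hk⟩ := hk
  obtain ⟨u, hu, hDu⟩ := (hDm k).residualEq_isOpen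
  have hune : u.Nonempty := by
    rw [Set.nonempty_iff_ne_empty]
    rintro rfl
    apply hk
    have : ∀ᶠ w in residual Cs, w ∈ (D k)ᶜ := by
      filter_upwards [hDu] with w hw
      intro hw'
      have h2 : (w ∈ D k) = (w ∈ (∅ : Set Cs)) := hw
      rw [h2] at hw'
      exact hw'
    exact this
  obtain ⟨q, hq, hqZ, hqD⟩ := cube_in_comeagre hu hune hDu hp
  have hcube : ∀ x ∈ cube (q.1, psi p q.2), x ∈ psi p '' (D k) := by
    intro x hx
    classical
    refine ⟨fun j => if j ∈ p.1 then x j else q.2 j, hqD ?_, ?_⟩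
    · intro j hj
      by_cases hjp : j ∈ p.1
      · have := hx j hj
        simp only [psi, hjp, if_true] at this
        simp [hjp, this]
      · simp [hjp]
    · funext j
      by_cases hjp : j ∈ p.1
      · simp [psi, hjp]
      · have := hx j (fun h => hjp (hqZ h))
        simp only [psi, hjp, if_false] at this
        simp [psi, hjp, this]
  refine ⟨(q.1, psi p q.2), hq, fun j _ => ⟨fun h => hqZ h, fun h => by simp [psi, h]⟩, k, ?_, ?_⟩
  · obtain ⟨w, hw, -⟩ := hcube (psi p q.2) (fun j _ => rfl)
    exact subset_union_left.trans hw
  · intro x hx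
    obtain ⟨w, hw, rfl⟩ := hcube x hx
    exact subset_union_right.trans hw

/-- The alternative handled at each stage. -/
def Alt (U : ℕ → ℕ → Set Cs) (Q : Set Cs) (K : Set Cs) : Prop :=
  (∃ n, ∃ S : Set Cs, S.Finite ∧ S ⊆ Q ∧ ∀ k, ¬ S ⊆ U n k) ∨
  (∃ g : ℕ → ℕ, ∀ y ∈ K ∪ Q, ∃ N, ∀ n, N ≤ n → y ∈ U n (g n))

theorem step {p : Nd} (hp : p.1.Infinite) {Q R : Set Cs} (hQ : Q.Countable) (hR : R.Countable)
    (hQR : Disjoint Q R)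
    (U : ℕ → ℕ → Set Cs) (hU : ∀ n k, MeasurableSet (U n k)) :
    ∃ (q : Nd) (P : Set Cs), q.1.Infinite ∧ les q p ∧ P.Countable ∧ P ⊆ cst p ∧ Disjoint P R ∧
      Alt U (Q ∪ P) (cst q) := by
  by_cases H : ∀ x ∈ cst p, (∀ r ∈ R, r ∉ near x) → ∀ n, ∀ S : Set Cs, S.Finite →
      S ⊆ Q ∪ near x → ∃ k, S ⊆ U n k
  swap
  · push Not at H
    obtain ⟨x, hx, hxR, n, S, hS, hSQ, hSU⟩ := H
    refine ⟨p, near x, hp, les_refl p, near_countable x, ?_, ?_, Or.inl ⟨n, S, hS, hSQ, hSU⟩⟩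
    · rintro y ⟨m, hm⟩
      obtain ⟨m', hm'⟩ := hx
      exact ⟨max m m', fun j hj hjp => by
        rw [hm j (by omega), hm' j (by omega) hjp]⟩
    · rw [Set.disjoint_left]
      exact fun r hr hrR => hxR r hrR hr
  · obtain ⟨F, hFfin, hFQ, hF⟩ : ∃ F : ℕ → Set Cs, (∀ n, (F n).Finite) ∧ (∀ n, F n ⊆ Q) ∧
        ∀ y ∈ Q, ∃ N, ∀ n, N ≤ n → y ∈ F n := by
      rcases Q.eq_empty_or_nonempty with rfl | hne
      · exact ⟨fun _ => ∅, by simp, by simp, by simp⟩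
      · obtain ⟨f, rfl⟩ := hQ.exists_eq_range hne
        refine ⟨fun n => f '' (Set.Iic n), fun n => (Set.finite_Iic n).image f,
          fun n => image_subset_range _ _, ?_⟩
        rintro _ ⟨N, rfl⟩
        exact ⟨N, fun n hn => ⟨N, hn, rfl⟩⟩
    -- states: condition together with a bound
    let St : Type := {s : Nd × ℕ // s.1.1.Infinite ∧ le 0 s.1 p}
    have hstep : ∀ (n : ℕ) (s : St), ∃ s' : St, le 0 s'.1.1 s.1.1 ∧
        (∃ e ∈ s.1.1.1, s.1.2 ≤ e ∧ e < s'.1.2) ∧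
        ∃ k, F n ⊆ U n k ∧ ∀ x ∈ cube s'.1.1, nearm s'.1.2 x ⊆ U n k := by
      rintro n ⟨⟨r, m⟩, hr, hrp⟩
      obtain ⟨e, he, hme⟩ := hr.exists_gt m
      obtain ⟨q, hq, hqr, k, hk1, hk2⟩ := one_step (F := F n) hr hR (U n) (hU n) (e + 1) (by
        intro x hx hxR
        refine H x (cst_mono ⟨0, hrp⟩ hx) hxR n _ ((hFfin n).union (nearm_finite _ _)) ?_
        refine union_subset_union (hFQ n) ?_
        rw [near_eq]
        exact subset_iUnion (fun m => nearm m x) (e + 1))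
      exact ⟨⟨(q, e + 1), hq, le_trans' hqr hrp⟩, hqr, ⟨e, he, by simpa using hme.le, by simp⟩,
        k, hk1, hk2⟩
    choose f hf1 hf2 hf3 using hstep
    let s : ℕ → St := fun n => Nat.rec ⟨(p, 0), hp, le_refl 0 p⟩ (fun n s => f n s) n
    have hs : ∀ n, s (n + 1) = f n (s n) := fun n => rfl
    have hM : StrictMono (fun n => (s n).1.2) := strictMono_nat_of_lt_succ fun n => by
      obtain ⟨e, -, h1, h2⟩ := hf2 n (s n)
      rw [hs]; exact h1.trans_lt h2
    have hdec : ∀ i n, i ≤ n → le 0 (s n).1.1 (s i).1.1 := by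
      intro i n hin
      induction n, hin using Nat.le_induction with
      | base => exact le_refl _ _
      | succ n _ ih => exact le_trans' (hf1 n (s n)) ih
    obtain ⟨q, hq, hqle⟩ := fusion (fun n => (s n).1.1) (fun n => (s n).1.2) hM
      (fun n i hi => le_mono (Nat.zero_le _) (hdec i n hi)) (fun n => hf2 n (s n))
    choose g hg1 hg2 using fun n => hf3 n (s n)
    refine ⟨q, ∅, hq, ⟨_, hqle 0⟩, countable_empty, empty_subset _, by simp, Or.inr ⟨g, ?_⟩⟩
    rintro y (hy | hy)
    · obtain ⟨m, hm⟩ := hy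
      refine ⟨m, fun n hn => ?_⟩
      have hMm : m ≤ (s (n + 1)).1.2 := by
        have := hM.id_le (n + 1)
        simp only [id] at this
        omega
      classical
      let x : Cs := fun j => if (s (n + 1)).1.2 ≤ j then y j else (s (n + 1)).1.1.2 j
      refine hg2 n (x := x) ?_ ?_
      · intro j hj
        by_cases hjm : (s (n + 1)).1.2 ≤ j
        · have hjq := hqle (n + 1) j hjm
          have : x j = y j := by simp [x, hjm]
          rw [this, hm j (by omega) (fun h => hj (hjq.1 h))]
          exact hjq.2 hj
        · simp only [x, hjm, if_false]; rfl
      · intro j hj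
        simp only [x]
        rw [if_pos]
        exact hj
    · rw [union_empty] at hy
      obtain ⟨N, hN⟩ := hF y hy
      exact ⟨N, fun n hn => hg1 n (hN n hn)⟩

theorem Alt.mono_left {U : ℕ → ℕ → Set Cs} {Q Q' K K' : Set Cs} (h : Alt U Q K)
    (hQ : Q ⊆ Q') (hK : K' ∪ Q' ⊆ K ∪ Q) : Alt U Q' K' := by
  rcases h with ⟨n, S, hS, hSQ, h⟩ | ⟨g, hg⟩
  · exact Or.inl ⟨n, S, hS, hSQ.trans hQ, h⟩
  · exact Or.inr ⟨g, fun y hy => hg y (hK hy)⟩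

theorem stage {p : Nd} (hp : p.1.Infinite) {QA QB : Set Cs} (hA : QA.Countable)
    (hB : QB.Countable) (hAB : Disjoint QA QB)
    (U : ℕ → ℕ → Set Cs) (hU : ∀ n k, MeasurableSet (U n k)) :
    ∃ (q : Nd) (PA PB : Set Cs), q.1.Infinite ∧ les q p ∧ PA.Countable ∧ PB.Countable ∧
      PA ⊆ cst p ∧ PB ⊆ cst p ∧ Disjoint (QA ∪ PA) (QB ∪ PB) ∧
      Alt U (QA ∪ PA) (cst q) ∧ Alt U (QB ∪ PB) (cst q) ∧
      ((∃ a ∈ PA, a ∉ U 0 0) ∨ (∃ b ∈ PB, b ∈ U 0 0)) := by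
  obtain ⟨q1, PA, hq1, hq1p, hPA, hPAp, hPAB, hAlt1⟩ := step hp hA hB hAB U hU
  have hd1 : Disjoint QB (QA ∪ PA) := by
    rw [disjoint_union_right]; exact ⟨hAB.symm, hPAB.symm⟩
  obtain ⟨q2, PB, hq2, hq21, hPB, hPBq, hPBA, hAlt2⟩ := step hq1 hB (hA.union hPA) hd1 U hU
  have hd2 : Disjoint (QA ∪ PA) (QB ∪ PB) := by
    rw [disjoint_union_right]; exact ⟨hd1.symm, hPBA.symm⟩
  obtain ⟨x, hx, hxR⟩ := avoid hq2 ((hA.union hPA).union (hB.union hPB))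
  have hxA : x ∉ QA ∪ PA := fun h => hxR (Or.inl h)
  have hxB : x ∉ QB ∪ PB := fun h => hxR (Or.inr h)
  have h21 := cst_mono hq21
  have h1p := cst_mono hq1p
  by_cases hxU : x ∈ U 0 0
  · refine ⟨q2, PA, insert x PB, hq2, les_trans hq21 hq1p, hPA, hPB.insert x, hPAp, ?_, ?_, ?_, ?_,
      Or.inr ⟨x, mem_insert _ _, hxU⟩⟩
    · exact insert_subset (h1p (h21 hx)) (hPBq.trans h1p)
    · rw [union_insert, disjoint_insert_right]; exact ⟨hxA, hd2⟩
    · exact hAlt1.mono_left le_rfl (union_subset_union_left _ h21)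
    · refine hAlt2.mono_left (union_subset_union_right _ (subset_insert _ _)) ?_
      rw [union_insert]
      exact union_subset subset_union_left (insert_subset (Or.inl hx) subset_union_right)
  · refine ⟨q2, insert x PA, PB, hq2, les_trans hq21 hq1p, hPA.insert x, hPB, ?_, hPBq.trans h1p,
      ?_, ?_, ?_, Or.inl ⟨x, mem_insert _ _, hxU⟩⟩
    · exact insert_subset (h1p (h21 hx)) hPAp
    · rw [union_insert, disjoint_insert_left]; exact ⟨hxB, hd2⟩
    · refine hAlt1.mono_left (union_subset_union_right _ (subset_insert _ _)) ?_
      rw [union_insert]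
      exact union_subset (h21.trans subset_union_left)
        (insert_subset (Or.inl (h21 hx)) subset_union_right)
    · exact hAlt2

/-! ### The transfinite recursion -/

theorem rec_exists {ι N : Type} [LinearOrder ι] [WellFoundedLT ι] [Nonempty N]
    (Rq : ι → (ι → N) → N → Prop)
    (hcongr : ∀ a h h' z, (∀ b < a, h b = h' b) → Rq a h z → Rq a h' z)
    (hex : ∀ a h, (∀ b < a, Rq b h (h b)) → ∃ z, Rq a h z) :
    ∃ g : ι → N, ∀ a, Rq a g (g a) := by
  classical
  let ext : (a : ι) → ((b : ι) → b < a → N) → ι → N :=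
    fun a h b => if hb : b < a then h b hb else Classical.arbitrary N
  let F : (a : ι) → ((b : ι) → b < a → N) → N := fun a h =>
    if hz : ∃ z, Rq a (ext a h) z then hz.choose else Classical.arbitrary N
  let g : ι → N := (wellFounded_lt (α := ι)).fix F
  have hg : ∀ a, g a = F a (fun b _ => g b) := fun a => WellFounded.fix_eq _ F a
  refine ⟨g, fun a => ?_⟩
  induction a using WellFoundedLT.induction with
  | ind a ih =>
    have hag : ∀ b < a, g b = ext a (fun b _ => g b) b := by
      intro b hb
      simp [ext, hb]
    obtain ⟨z, hz⟩ := hex a g ih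
    have hz' : ∃ z, Rq a (ext a (fun b _ => g b)) z := ⟨z, hcongr a _ _ z hag hz⟩
    have h1 : g a = hz'.choose := by
      rw [hg a]
      simp only [F]
      rw [dif_pos hz']
    rw [h1]
    exact hcongr a _ _ _ (fun b hb => (hag b hb).symm) hz'.choose_spec

abbrev Task : Type := ℕ → ℕ → {s : Set Cs // MeasurableSet s}

theorem task_card : Cardinal.mk Task ≤ Cardinal.continuum := by
  have h1 : Cardinal.mk {s : Set Cs // MeasurableSet s} ≤ Cardinal.continuum := by
    obtain ⟨b, hb, hb'⟩ := MeasurableSpace.CountablyGenerated.isCountablyGenerated (α := Cs)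
    have h2 : Cardinal.mk b ≤ Cardinal.continuum :=
      (Cardinal.le_aleph0_iff_set_countable.2 hb).trans Cardinal.aleph0_le_continuum
    have := MeasurableSpace.cardinal_measurableSet_le_continuum h2
    rw [← hb'] at this
    exact this
  simp only [Task, Cardinal.mk_pi, Cardinal.prod_const, Cardinal.lift_id, Cardinal.mk_nat]
  calc _ ≤ (Cardinal.continuum ^ Cardinal.aleph0) ^ Cardinal.aleph0 :=
        Cardinal.power_le_power_right (Cardinal.power_le_power_right h1)
    _ = _ := by simp

/-- Property (P) for a set of points of a measurable space. -/
def PP {β : Type} [MeasurableSpace β] (A : Set β) : Prop :=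
  ∀ U : ℕ → ℕ → Set β, (∀ n k, MeasurableSet (U n k)) →
    (∀ n, ∀ S : Set β, S.Finite → S ⊆ A → ∃ k, S ⊆ U n k) →
    ∃ g : ℕ → ℕ, ∀ y ∈ A, ∃ N, ∀ n, N ≤ n → y ∈ U n (g n)

/-- lower bounds for countable chains -/
theorem lower_bound_family {ι : Type} [LinearOrder ι] (a : ι) (hc : (Set.Iio a).Countable)
    (nd : ι → Nd) (hinf : ∀ b < a, (nd b).1.Infinite)
    (hle : ∀ b < a, ∀ c < b, les (nd b) (nd c)) :
    ∃ q : Nd, q.1.Infinite ∧ ∀ b < a, les q (nd b) := by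
  rcases (Set.Iio a).eq_empty_or_nonempty with he | hne
  · refine ⟨(univ, fun _ => false), infinite_univ, fun b hb => ?_⟩
    have : b ∈ Set.Iio a := hb
    rw [he] at this
    exact this.elim
  · obtain ⟨f, hf⟩ := hc.exists_eq_range hne
    have hfa : ∀ n, f n < a := fun n => by
      have : f n ∈ Set.Iio a := hf ▸ mem_range_self n
      exact this
    let m : ℕ → ι := fun n => partialSups f n
    have hma : ∀ n, m n < a := by
      intro n
      induction n with
      | zero => simpa [m] using hfa 0
      | succ n ih => simp only [m, partialSups_add_one] at ih ⊢; exact max_lt ih (hfa _)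
    have hles : ∀ b < a, ∀ c ≤ b, les (nd b) (nd c) := by
      intro b hb c hcb
      rcases hcb.eq_or_lt with rfl | h
      · exact les_refl _
      · exact hle b hb c h
    obtain ⟨q, hq, hq'⟩ := lower_bound (fun n => nd (m n)) (fun n => hinf _ (hma n))
      (fun n i hi => hles _ (hma n) _ ((partialSups f).monotone hi))
    refine ⟨q, hq, fun b hb => ?_⟩
    obtain ⟨n, rfl⟩ : b ∈ range f := hf ▸ (show b ∈ Set.Iio a from hb)
    exact les_trans (hq' n) (hles _ (hma n) _ (le_partialSups f n))

theorem main_construction (hCH : Cardinal.continuum.{0} = Cardinal.aleph.{0} 1) :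
    ∃ A B : Set Cs, Disjoint A B ∧ PP A ∧ PP B ∧
      ∀ C : Set Cs, MeasurableSet C → A ⊆ C → Disjoint B C → False := by
  let ι : Type := (Cardinal.aleph 1).ord.ToType
  have hcount : ∀ a : ι, (Set.Iio a).Countable := fun a => by
    rw [← Cardinal.le_aleph0_iff_set_countable, ← Cardinal.lt_aleph_one_iff]
    exact Cardinal.mk_Iio_toType_ord_lt a
  have hcard : Cardinal.mk Task ≤ Cardinal.mk ι := by
    rw [Cardinal.mk_toType, Cardinal.card_ord, ← hCH]
    exact task_card
  obtain ⟨emb⟩ := hcard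
  have : Nonempty Task := ⟨fun _ _ => ⟨∅, MeasurableSet.empty⟩⟩
  let tk : ι → Task := Function.invFun emb
  have htk : Function.Surjective tk := Function.invFun_surjective emb.injective
  let N : Type := Nd × Set Cs × Set Cs
  let QA : ι → (ι → N) → Set Cs := fun a h => ⋃ b ∈ Set.Iio a, (h b).2.1
  let QB : ι → (ι → N) → Set Cs := fun a h => ⋃ b ∈ Set.Iio a, (h b).2.2
  let Rq : ι → (ι → N) → N → Prop := fun a h z =>
    z.1.1.Infinite ∧ (∀ b < a, les z.1 (h b).1) ∧ z.2.1.Countable ∧ z.2.2.Countable ∧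
    (∀ b < a, z.2.1 ⊆ cst (h b).1) ∧ (∀ b < a, z.2.2 ⊆ cst (h b).1) ∧
    Disjoint (QA a h ∪ z.2.1) (QB a h ∪ z.2.2) ∧
    Alt (fun n k => (tk a n k).1) (QA a h ∪ z.2.1) (cst z.1) ∧
    Alt (fun n k => (tk a n k).1) (QB a h ∪ z.2.2) (cst z.1) ∧
    ((∃ x ∈ z.2.1, x ∉ (tk a 0 0).1) ∨ (∃ x ∈ z.2.2, x ∈ (tk a 0 0).1))
  have : Nonempty N := ⟨((∅, fun _ => false), ∅, ∅)⟩
  have hdisj : ∀ a (h : ι → N), (∀ b < a, Rq b h (h b)) → Disjoint (QA a h) (QB a h) := by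
    intro a h hh
    rw [Set.disjoint_left]
    intro x hxA hxB
    simp only [QA, QB, mem_iUnion, mem_Iio, exists_prop] at hxA hxB
    obtain ⟨b, hb, hxb⟩ := hxA
    obtain ⟨c, hc, hxc⟩ := hxB
    rcases lt_trichotomy b c with hbc | rfl | hbc
    · obtain ⟨-, -, -, -, -, -, hd, -⟩ := hh c hc
      refine Set.disjoint_left.1 hd (Or.inl ?_) (Or.inr hxc)
      exact mem_biUnion (show b ∈ Set.Iio c from hbc) hxb
    · obtain ⟨-, -, -, -, -, -, hd, -⟩ := hh b hb
      exact Set.disjoint_left.1 hd (Or.inr hxb) (Or.inr hxc)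
    · obtain ⟨-, -, -, -, -, -, hd, -⟩ := hh b hb
      refine Set.disjoint_left.1 hd (Or.inr hxb) (Or.inl ?_)
      exact mem_biUnion (show c ∈ Set.Iio b from hbc) hxc
  obtain ⟨g, hg⟩ := rec_exists Rq (by
    intro a h h' z hb hR
    have hA : QA a h = QA a h' := by
      simp only [QA]
      exact iUnion₂_congr fun b hb' => by rw [hb b hb']
    have hB : QB a h = QB a h' := by
      simp only [QB]
      exact iUnion₂_congr fun b hb' => by rw [hb b hb']
    simp only [Rq] at hR ⊢
    rw [hA, hB] at hR
    obtain ⟨h1, h2, h3, h4, h5, h6, h7⟩ := hR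
    exact ⟨h1, fun b hb' => hb b hb' ▸ h2 b hb', h3, h4, fun b hb' => hb b hb' ▸ h5 b hb',
      fun b hb' => hb b hb' ▸ h6 b hb', h7⟩) (by
    intro a h hh
    obtain ⟨p, hp, hpl⟩ := lower_bound_family a (hcount a) (fun b => (h b).1)
      (fun b hb => (hh b hb).1) (fun b hb c hc => (hh b hb).2.1 c hc)
    obtain ⟨q, PA, PB, h1, h2, h3, h4, h5, h6, h7, h8, h9, h10⟩ := stage hp
      (QA := QA a h) (QB := QB a h)
      ((hcount a).biUnion fun b hb => (hh b hb).2.2.1)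
      ((hcount a).biUnion fun b hb => (hh b hb).2.2.2.1) (hdisj a h hh)
      (fun n k => (tk a n k).1) (fun n k => (tk a n k).2)
    exact ⟨(q, PA, PB), h1, fun b hb => les_trans h2 (hpl b hb), h3, h4,
      fun b hb => h5.trans (cst_mono (hpl b hb)), fun b hb => h6.trans (cst_mono (hpl b hb)),
      h7, h8, h9, h10⟩)
  have key : ∀ (pr : N → Set Cs), (∀ a, ∀ b < a, pr (g a) ⊆ cst (g b).1) →
      (∀ a, Alt (fun n k => (tk a n k).1) ((⋃ b ∈ Set.Iio a, pr (g b)) ∪ pr (g a))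
        (cst (g a).1)) → PP (⋃ a, pr (g a)) := by
    intro pr hpr halt U hU hcov
    obtain ⟨a, ha⟩ := htk (fun n k => ⟨U n k, hU n k⟩)
    have h := halt a
    rw [ha] at h
    rcases h with ⟨n, S, hS, hSQ, hno⟩ | ⟨f, hf⟩
    · obtain ⟨k, hk⟩ := hcov n S hS (hSQ.trans (union_subset
        (iUnion₂_subset fun b _ => subset_iUnion (fun b => pr (g b)) b)
        (subset_iUnion (fun b => pr (g b)) a)))
      exact (hno k hk).elim
    · refine ⟨f, fun y hy => hf y ?_⟩
      obtain ⟨b, hb⟩ := mem_iUnion.1 hy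
      rcases lt_trichotomy b a with hba | rfl | hba
      · exact Or.inr (Or.inl (mem_biUnion (show b ∈ Set.Iio a from hba) hb))
      · exact Or.inr (Or.inr hb)
      · exact Or.inl (hpr b a hba hb)
  refine ⟨⋃ a, (g a).2.1, ⋃ a, (g a).2.2, ?_, ?_, ?_, ?_⟩
  · rw [Set.disjoint_left]
    intro x hxA hxB
    obtain ⟨b, hxb⟩ := mem_iUnion.1 hxA
    obtain ⟨c, hxc⟩ := mem_iUnion.1 hxB
    rcases lt_trichotomy b c with hbc | rfl | hbc
    · obtain ⟨-, -, -, -, -, -, hd, -⟩ := hg c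
      refine Set.disjoint_left.1 hd (Or.inl ?_) (Or.inr hxc)
      exact mem_biUnion (show b ∈ Set.Iio c from hbc) hxb
    · obtain ⟨-, -, -, -, -, -, hd, -⟩ := hg b
      exact Set.disjoint_left.1 hd (Or.inr hxb) (Or.inr hxc)
    · obtain ⟨-, -, -, -, -, -, hd, -⟩ := hg b
      refine Set.disjoint_left.1 hd (Or.inr hxb) (Or.inl ?_)
      exact mem_biUnion (show c ∈ Set.Iio b from hbc) hxc
  · exact key (fun z => z.2.1) (fun a => (hg a).2.2.2.2.1) (fun a => (hg a).2.2.2.2.2.2.2.1)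
  · exact key (fun z => z.2.2) (fun a => (hg a).2.2.2.2.2.1) (fun a => (hg a).2.2.2.2.2.2.2.2.1)
  · intro C hC hAC hBC
    obtain ⟨a, ha⟩ := htk (fun _ _ => ⟨C, hC⟩)
    have h := (hg a).2.2.2.2.2.2.2.2.2
    rw [ha] at h
    rcases h with ⟨x, hx, hxC⟩ | ⟨x, hx, hxC⟩
    · exact hxC (hAC (mem_iUnion.2 ⟨a, hx⟩))
    · exact Set.disjoint_left.1 hBC (mem_iUnion.2 ⟨a, hx⟩) hxC

/-! ### Covers -/

open Filter in
theorem gamma_of_eventually {X : Type} (V : ℕ → Set X) (hV : ∀ n, V n ≠ univ)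
    (h : ∀ x, ∀ᶠ n in atTop, x ∈ V n) : IsGammaCover (range V) := by
  refine ⟨⟨?_, ?_⟩, ?_, ?_⟩
  · refine eq_univ_of_forall fun x => ?_
    obtain ⟨n, hn⟩ := (h x).exists
    exact ⟨V n, mem_range_self n, hn⟩
  · rintro ⟨n, hn⟩
    exact hV n hn
  · intro hfin
    have hc : ∀ U ∈ range V, ∃ x, x ∉ U := by
      rintro _ ⟨n, rfl⟩
      exact (ne_univ_iff_exists_notMem _).1 (hV n)
    have : Nonempty X := ⟨(hc (V 0) (mem_range_self 0)).choose⟩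
    choose! c hc using hc
    have hall : ∀ᶠ n in atTop, ∀ U ∈ range V, c U ∈ V n :=
      (Filter.eventually_all_finite hfin).2 fun U _ => h (c U)
    obtain ⟨n, hn⟩ := hall.exists
    exact hc (V n) (mem_range_self n) (hn _ (mem_range_self n))
  · intro x
    obtain ⟨N, hN⟩ := eventually_atTop.1 (h x)
    refine ((Set.finite_Iio N).image V).subset ?_
    rintro _ ⟨⟨n, rfl⟩, hn⟩
    refine ⟨n, ?_, rfl⟩
    by_contra hlt
    exact hn (hN n (not_lt.1 hlt))

theorem gamma_tau {X : Type} {𝒰 : Set (Set X)} (h : IsGammaCover 𝒰) : IsTauCover 𝒰 := by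
  obtain ⟨h1, h2, h3⟩ := h
  refine ⟨⟨h1, fun x hfin => h2 ?_⟩, fun x y => Or.inl ((h3 y).subset ?_)⟩
  · refine (hfin.union (h3 x)).subset fun U hU => ?_
    by_cases hx : x ∈ U
    · exact Or.inl ⟨hU, hx⟩
    · exact Or.inr ⟨hU, hx⟩
  · rintro U ⟨hU, -, hy⟩
    exact ⟨hU, hy⟩

theorem PP.image {β γ : Type} [MeasurableSpace β] [MeasurableSpace γ] {A : Set β} (hA : PP A)
    {f : β → γ} (hf : Measurable f) : PP (f '' A) := by
  intro U hU hcov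
  obtain ⟨g, hg⟩ := hA (fun n k => f ⁻¹' U n k) (fun n k => hf (hU n k)) (by
    intro n S hS hSA
    obtain ⟨k, hk⟩ := hcov n (f '' S) (hS.image f) (image_mono hSA)
    exact ⟨k, image_subset_iff.1 hk⟩)
  refine ⟨g, ?_⟩
  rintro _ ⟨y, hy, rfl⟩
  exact hg y hy

theorem PP.subtype {β : Type} [MeasurableSpace β] {A Y : Set β} (hA : PP A) (hAY : A ⊆ Y) :
    PP ((Subtype.val : ↥Y → β) ⁻¹' A) := by
  intro U hU hcov
  choose V hV hVU using hU
  obtain ⟨g, hg⟩ := hA V hV (by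
    intro n S hS hSA
    obtain ⟨k, hk⟩ := hcov n (Subtype.val ⁻¹' S)
      (hS.preimage Subtype.val_injective.injOn) (preimage_mono hSA)
    refine ⟨k, fun x hx => ?_⟩
    have : (⟨x, hAY (hSA hx)⟩ : ↥Y) ∈ U n k := hk hx
    rw [← hVU n k] at this
    exact this)
  refine ⟨g, fun y hy => ?_⟩
  obtain ⟨N, hN⟩ := hg y.1 hy
  refine ⟨N, fun n hn => ?_⟩
  rw [← hVU]
  exact hN n hn

theorem PP.s1 {X : Type} [MeasurableSpace X] (h : PP (univ : Set X)) :
    S1 (BorelOmega X) (BorelGamma X) := by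
  intro 𝒰 h𝒰
  have henum : ∀ n, ∃ u : ℕ → Set X, 𝒰 n = range u := by
    intro n
    obtain ⟨U, hU, -⟩ := (h𝒰 n).2.2.2 ∅ finite_empty
    exact (h𝒰 n).1.exists_eq_range ⟨U, hU⟩
  choose u hu using henum
  have hmem : ∀ n k, u n k ∈ 𝒰 n := fun n k => by rw [hu n]; exact mem_range_self k
  obtain ⟨g, hg⟩ := h u (fun n k => (h𝒰 n).2.1 _ (hmem n k)) (by
    intro n S hS _
    obtain ⟨U, hU, hSU⟩ := (h𝒰 n).2.2.2 S hS
    rw [hu n] at hU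
    obtain ⟨k, rfl⟩ := hU
    exact ⟨k, hSU⟩)
  refine ⟨fun n => u n (g n), fun n => hmem n _, countable_range _, ?_, ?_⟩
  · rintro _ ⟨n, rfl⟩
    exact (h𝒰 n).2.1 _ (hmem n _)
  · refine gamma_of_eventually _ (fun n hn => ?_) (fun x => ?_)
    · exact (h𝒰 n).2.2.1.2 (hn ▸ hmem n (g n))
    · exact Filter.eventually_atTop.2 (hg x (mem_univ x))

theorem AlmostSubset.trans {a b c : Set ℕ} (h1 : AlmostSubset a b) (h2 : AlmostSubset b c) :
    AlmostSubset a c := by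
  refine (h1.union h2).subset fun x hx => ?_
  by_cases hb : x ∈ b
  · exact Or.inr ⟨hb, hx.2⟩
  · exact Or.inl ⟨hx.1, hb⟩

open Filter in
/-- A tau-cover of a union of two sets with (P) contains an eventual gamma-sequence. -/
theorem tau_seq {X : Type} [MeasurableSpace X] [Nonempty X] {A B : Set X} (hAB : A ∪ B = univ)
    (hA : PP A) (hB : PP B) (u : ℕ → Set X) (hu : ∀ k, MeasurableSet (u k))
    (hinf : ∀ x, {k | x ∈ u k}.Infinite)
    (hlin : ∀ x y, AlmostSubset {k | x ∈ u k} {k | y ∈ u k} ∨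
      AlmostSubset {k | y ∈ u k} {k | x ∈ u k}) :
    ∃ c : ℕ → ℕ, ∀ x, ∀ᶠ j in atTop, x ∈ u (c j) := by
  have hmin : ∀ S : Set X, S.Finite → ∃ x, ∀ y ∈ S, AlmostSubset {k | x ∈ u k} {k | y ∈ u k} := by
    intro S hS
    induction S, hS using Set.Finite.induction_on with
    | empty => exact ⟨Classical.arbitrary X, by simp⟩
    | @insert y S _ _ ih =>
      obtain ⟨x, hx⟩ := ih
      rcases hlin x y with h | h
      · exact ⟨x, by simpa using ⟨h, hx⟩⟩
      · refine ⟨y, ?_⟩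
        rintro z (rfl | hz)
        · simp [AlmostSubset]
        · exact h.trans (hx z hz)
  have hcov : ∀ j, ∀ S : Set X, S.Finite → ∃ i, S ⊆ u (j + i) := by
    intro j S hS
    obtain ⟨x, hx⟩ := hmin S hS
    have hfin : (⋃ y ∈ S, ({k | x ∈ u k} \ {k | y ∈ u k})).Finite := hS.biUnion hx
    obtain ⟨k, hk, hjk⟩ := ((hinf x).diff hfin).exists_gt j
    refine ⟨k - j, fun y hy => ?_⟩
    rw [show j + (k - j) = k by omega]
    by_contra hyk
    exact hk.2 (mem_biUnion hy ⟨hk.1, hyk⟩)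
  have hone : ∀ {A' : Set X}, PP A' → ∃ c : ℕ → ℕ, (∀ j, j ≤ c j) ∧
      ∀ x ∈ A', ∀ᶠ j in atTop, x ∈ u (c j) := by
    intro A' hA'
    obtain ⟨g, hg⟩ := hA' (fun j i => u (j + i)) (fun j i => hu _) (fun j S hS _ => hcov j S hS)
    exact ⟨fun j => j + g j, fun j => Nat.le_add_right _ _, fun x hx => eventually_atTop.2 (hg x hx)⟩
  have htr : ∀ (c : ℕ → ℕ), (∀ j, j ≤ c j) → ∀ x y,
      AlmostSubset {k | x ∈ u k} {k | y ∈ u k} → (∀ᶠ j in atTop, x ∈ u (c j)) →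
      ∀ᶠ j in atTop, y ∈ u (c j) := by
    intro c hc x y hxy hx
    obtain ⟨M, hM⟩ := hxy.bddAbove
    filter_upwards [hx, eventually_gt_atTop M] with j hj hjM
    by_contra hy
    have := hM (show c j ∈ _ from ⟨hj, hy⟩)
    have := hc j
    omega
  obtain ⟨cA, hcA, hA'⟩ := hone hA
  obtain ⟨cB, hcB, hB'⟩ := hone hB
  by_cases hx : ∃ x ∈ A, ∀ y ∈ B, AlmostSubset {k | x ∈ u k} {k | y ∈ u k}
  · obtain ⟨x, hxA, hx⟩ := hx
    refine ⟨cA, fun y => ?_⟩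
    rcases (show y ∈ A ∪ B from hAB ▸ mem_univ y) with hy | hy
    · exact hA' y hy
    · exact htr cA hcA x y (hx y hy) (hA' x hxA)
  · push Not at hx
    refine ⟨cB, fun x => ?_⟩
    rcases (show x ∈ A ∪ B from hAB ▸ mem_univ x) with hxA | hxB
    · obtain ⟨y, hy, hxy⟩ := hx x hxA
      exact htr cB hcB y x ((hlin x y).resolve_left hxy) (hB' y hy)
    · exact hB' x hxB

open Filter in
theorem tau_s1 {X : Type} [MeasurableSpace X] [Nonempty X] {A B : Set X} (hAB : A ∪ B = univ)
    (hA : PP A) (hB : PP B) {𝒰 : ℕ → Set (Set X)} (h𝒰 : ∀ n, 𝒰 n ∈ BorelTau X) :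
    ∃ V : ℕ → Set X, (∀ n, V n ∈ 𝒰 n) ∧ ∀ x, ∀ᶠ n in atTop, x ∈ V n := by
  have hW : ∀ n, ∃ W : ℕ → Set X, (∀ k, W k ∈ 𝒰 n) ∧ ∀ x, ∀ᶠ k in atTop, x ∈ W k := by
    intro n
    obtain ⟨hc, hm, ⟨hcov, hlarge⟩, hlin⟩ := h𝒰 n
    have hinf : (𝒰 n).Infinite :=
      (hlarge (Classical.arbitrary X)).mono fun U hU => hU.1
    have := hinf.to_subtype
    have := hc.to_subtype
    obtain ⟨e⟩ : Nonempty (ℕ ≃ ↥(𝒰 n)) := nonempty_equiv_of_countable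
    have hinj : Function.Injective (fun k => (e k).1) := Subtype.val_injective.comp e.injective
    have hsurj : ∀ U ∈ 𝒰 n, ∃ k, (e k).1 = U := fun U hU => ⟨e.symm ⟨U, hU⟩, by simp⟩
    have hpre : ∀ P : Set X → Prop, {U ∈ 𝒰 n | P U}.Finite → {k | P (e k).1}.Finite := by
      intro P hP
      refine (hP.preimage hinj.injOn).subset fun k hk => ⟨(e k).2, hk⟩
    obtain ⟨c, hc⟩ := tau_seq hAB hA hB (fun k => (e k).1) (fun k => hm _ (e k).2) (by
      intro x hfin
      refine hlarge x ((hfin.image (fun k => (e k).1)).subset ?_)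
      rintro U ⟨hU, hxU⟩
      obtain ⟨k, rfl⟩ := hsurj U hU
      exact ⟨k, hxU, rfl⟩) (by
      intro x y
      exact (hlin x y).imp (hpre (fun U => x ∈ U ∧ y ∉ U)) (hpre (fun U => y ∈ U ∧ x ∉ U)))
    exact ⟨fun j => (e (c j)).1, fun j => (e (c j)).2, hc⟩
  choose W hW𝒰 hWe using hW
  let T : ℕ → ℕ → Set X := fun n m => ⋂ k ∈ Set.Ici m, W n k
  have hTm : ∀ n m, MeasurableSet (T n m) := fun n m =>
    MeasurableSet.biInter (to_countable _) fun k _ => (h𝒰 n).2.1 _ (hW𝒰 n k)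
  have hTcov : ∀ n, ∀ S : Set X, S.Finite → ∃ m, S ⊆ T n m := by
    intro n S hS
    have hall : ∀ᶠ k in atTop, ∀ x ∈ S, x ∈ W n k :=
      (Filter.eventually_all_finite hS).2 fun x _ => hWe n x
    obtain ⟨m, hm⟩ := eventually_atTop.1 hall
    exact ⟨m, fun x hx => mem_iInter₂.2 fun k hk => hm k hk x hx⟩
  obtain ⟨gA, hgA⟩ := hA T hTm (fun n S hS _ => hTcov n S hS)
  obtain ⟨gB, hgB⟩ := hB T hTm (fun n S hS _ => hTcov n S hS)
  refine ⟨fun n => W n (max (gA n) (gB n)), fun n => hW𝒰 n _, fun x => ?_⟩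
  rcases (show x ∈ A ∪ B from hAB ▸ mem_univ x) with hx | hx
  · filter_upwards [eventually_atTop.2 (hgA x hx)] with n hn
    exact mem_iInter₂.1 hn _ (mem_Ici.2 (le_max_left _ _))
  · filter_upwards [eventually_atTop.2 (hgB x hx)] with n hn
    exact mem_iInter₂.1 hn _ (mem_Ici.2 (le_max_right _ _))

theorem exists_embedding : ∃ E : Cs × Bool → ℝ, Topology.IsEmbedding E := by
  let φ : Cs → ℝ := fun y => (cantorSetHomeomorphNatToBool.symm y : ℝ)
  have hφ : Continuous φ := continuous_subtype_val.comp cantorSetHomeomorphNatToBool.symm.continuous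
  have hφi : Function.Injective φ :=
    Subtype.val_injective.comp cantorSetHomeomorphNatToBool.symm.injective
  have hφ1 : ∀ y, φ y ∈ Set.Icc (0 : ℝ) 1 := fun y =>
    cantorSet_subset_unitInterval (cantorSetHomeomorphNatToBool.symm y).2
  let E : Cs × Bool → ℝ := fun z => φ z.1 + (if z.2 then 2 else 0)
  have hE : Continuous E := by
    refine (hφ.comp continuous_fst).add ?_
    have : Continuous (fun b : Bool => if b then (2 : ℝ) else 0) := continuous_of_discreteTopology
    exact this.comp continuous_snd
  have hEi : Function.Injective E := by
    rintro ⟨y, b⟩ ⟨y', b'⟩ h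
    have h1 := hφ1 y
    have h2 := hφ1 y'
    simp only [mem_Icc] at h1 h2
    simp only [E] at h
    cases b <;> cases b' <;> simp at h
    · rw [hφi h]
    · linarith
    · linarith
    · rw [hφi h]
  exact ⟨E, (hE.isClosedEmbedding hEi).isEmbedding⟩

theorem ch_zero (hCH : Cardinal.continuum = Cardinal.aleph 1) :
    Cardinal.continuum.{0} = Cardinal.aleph.{0} 1 := by
  apply Cardinal.lift_injective
  rw [Cardinal.lift_continuum, hCH]
  simp

open Filter in
/-- The main part of the theorem, together with the good behaviour of the union. -/
theorem main_part (hCH : Cardinal.continuum.{0} = Cardinal.aleph.{0} 1) :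
    ∃ A B : Set ℝ,
      S1 (BorelOmega ↥A) (BorelGamma ↥A) ∧
      S1 (BorelOmega ↥B) (BorelGamma ↥B) ∧
      ¬ Binom (OpenOmega ↥(A ∪ B)) (OpenTau ↥(A ∪ B)) ∧
      S1 (BorelTau ↥(A ∪ B)) (BorelGamma ↥(A ∪ B)) := by
  obtain ⟨A, B, hAB, hA, hB, hsep⟩ := main_construction hCH
  obtain ⟨E, hE⟩ := exists_embedding
  let eA : Cs → ℝ := fun y => E (y, false)
  let eB : Cs → ℝ := fun y => E (y, true)
  have heA : Measurable eA := (hE.continuous.comp (by fun_prop)).measurable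
  have heB : Measurable eB := (hE.continuous.comp (by fun_prop)).measurable
  have hA' : PP (eA '' A) := hA.image heA
  have hB' : PP (eB '' B) := hB.image heB
  have hAX : eA '' A ⊆ eA '' A ∪ eB '' B := subset_union_left
  have hBX : eB '' B ⊆ eA '' A ∪ eB '' B := subset_union_right
  have hS1 : ∀ Y : Set ℝ, PP Y → S1 (BorelOmega ↥Y) (BorelGamma ↥Y) := by
    intro Y hY
    apply PP.s1
    have := hY.subtype (subset_refl Y)
    rwa [Subtype.coe_preimage_self] at this
  have hne : A.Nonempty := by
    rw [nonempty_iff_ne_empty]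
    rintro rfl
    exact hsep ∅ MeasurableSet.empty (subset_refl _) (disjoint_empty _)
  obtain ⟨a0, ha0⟩ := hne
  let X : Set ℝ := eA '' A ∪ eB '' B
  have : Nonempty ↥X := ⟨⟨eA a0, hAX ⟨a0, ha0, rfl⟩⟩⟩
  have hcov : ((Subtype.val : ↥X → ℝ) ⁻¹' (eA '' A)) ∪
      ((Subtype.val : ↥X → ℝ) ⁻¹' (eB '' B)) = univ := by
    rw [← preimage_union]
    exact Subtype.coe_preimage_self X
  have hτ : ∀ 𝒰 : ℕ → Set (Set ↥X), (∀ n, 𝒰 n ∈ BorelTau ↥X) →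
      ∃ V : ℕ → Set ↥X, (∀ n, V n ∈ 𝒰 n) ∧ ∀ x, ∀ᶠ n in atTop, x ∈ V n :=
    fun 𝒰 h𝒰 => tau_s1 hcov (hA'.subtype hAX) (hB'.subtype hBX) h𝒰
  refine ⟨eA '' A, eB '' B, hS1 _ hA', hS1 _ hB', ?_, ?_⟩
  swap
  · intro 𝒰 h𝒰
    obtain ⟨V, hV, hVe⟩ := hτ 𝒰 h𝒰
    refine ⟨V, hV, countable_range _, ?_, gamma_of_eventually V (fun n hn => ?_) hVe⟩
    · rintro _ ⟨n, rfl⟩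
      exact (h𝒰 n).2.1 _ (hV n)
    · exact (h𝒰 n).2.2.1.1.2 (hn ▸ hV n)
  · have hO : ∀ C : TopologicalSpace.Clopens Cs, ∃ O : Set ℝ, IsOpen O ∧
        (∀ y, eA y ∈ O ↔ y ∈ (C : Set Cs)) ∧ (∀ y, eB y ∈ O ↔ y ∉ (C : Set Cs)) := by
      intro C
      have h1 : IsOpen ((C : Set Cs) ×ˢ ({false} : Set Bool) ∪ (C : Set Cs)ᶜ ×ˢ ({true} : Set Bool)) :=
        (C.isClopen.isOpen.prod (isOpen_discrete _)).union
          (C.isClopen.compl.isOpen.prod (isOpen_discrete _))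
      obtain ⟨O, hO, hOE⟩ := hE.isInducing.isOpen_iff.1 h1
      refine ⟨O, hO, fun y => ?_, fun y => ?_⟩
      · have : (y, false) ∈ E ⁻¹' O ↔ y ∈ (C : Set Cs) := by rw [hOE]; simp
        exact this
      · have : (y, true) ∈ E ⁻¹' O ↔ y ∉ (C : Set Cs) := by rw [hOE]; simp
        exact this
    choose O hOo hOA hOB using hO
    let W : TopologicalSpace.Clopens Cs → Set ↥X := fun C => Subtype.val ⁻¹' O C
    have : Countable (TopologicalSpace.Clopens Cs) :=
      TopologicalSpace.Clopens.countable_iff_secondCountable.2 inferInstance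
    have hfin : ∀ F : Set ↥X, F.Finite → ∃ U ∈ range W, F ⊆ U := by
      intro F hF
      have hi : ∀ b, Function.Injective (fun y : Cs => E (y, b)) := fun b y y' h => by
        have := hE.injective h
        simpa using this
      let FA : Set Cs := A ∩ eA ⁻¹' (Subtype.val '' F)
      let FB : Set Cs := B ∩ eB ⁻¹' (Subtype.val '' F)
      have hFA : FA.Finite := ((hF.image _).preimage (hi false).injOn).subset inter_subset_right
      have hFB : FB.Finite := ((hF.image _).preimage (hi true).injOn).subset inter_subset_right
      have hd : FA ⊆ FBᶜ := fun y hy hy' => Set.disjoint_left.1 hAB hy.1 hy'.1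
      obtain ⟨C, hC, hC1, hC2⟩ := exists_clopen_of_closed_subset_open hFA.isClosed
        hFB.isClosed.isOpen_compl hd
      refine ⟨W ⟨C, hC⟩, mem_range_self _, ?_⟩
      rintro ⟨x, hx⟩ hxF
      rcases hx with ⟨y, hy, rfl⟩ | ⟨y, hy, rfl⟩
      · exact (hOA ⟨C, hC⟩ y).2 (hC1 ⟨hy, _, hxF, rfl⟩)
      · exact (hOB ⟨C, hC⟩ y).2 (fun h => hC2 h ⟨hy, _, hxF, rfl⟩)
    have hmem : range W ∈ OpenOmega ↥X := by
      refine ⟨countable_range W, ?_, ⟨?_, ?_⟩, hfin⟩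
      · rintro _ ⟨C, rfl⟩
        exact (hOo C).preimage continuous_subtype_val
      · refine eq_univ_of_forall fun x => ?_
        obtain ⟨U, hU, hxU⟩ := hfin {x} (finite_singleton x)
        exact ⟨U, hU, hxU rfl⟩
      · rintro ⟨C, hC⟩
        refine hsep C C.isClopen.isOpen.measurableSet (fun y hy => ?_) ?_
        · have : (⟨eA y, hAX ⟨y, hy, rfl⟩⟩ : ↥X) ∈ W C := hC ▸ mem_univ _
          exact (hOA C y).1 this
        · rw [Set.disjoint_left]
          intro y hy
          have : (⟨eB y, hBX ⟨y, hy, rfl⟩⟩ : ↥X) ∈ W C := hC ▸ mem_univ _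
          exact (hOB C y).1 this
    intro hbin
    obtain ⟨𝒱, h𝒱, h𝒱τ⟩ := hbin (range W) hmem
    obtain ⟨V, hV, hVe⟩ := hτ (fun _ => 𝒱)
      (fun _ => ⟨h𝒱τ.1, fun U hU => (h𝒱τ.2.1 U hU).measurableSet, h𝒱τ.2.2⟩)
    choose C hC using fun n => h𝒱 (hV n)
    refine hsep {y | ∀ᶠ n in atTop, y ∈ (C n : Set Cs)} ?_ (fun y hy => ?_) ?_
    · have : {y | ∀ᶠ n in atTop, y ∈ (C n : Set Cs)} =
          ⋃ N : ℕ, ⋂ n ∈ Set.Ici N, (C n : Set Cs) := by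
        ext y
        simp [eventually_atTop]
      rw [this]
      exact MeasurableSet.iUnion fun N => MeasurableSet.biInter (to_countable _) fun n _ =>
        (C n).isClopen.isOpen.measurableSet
    · filter_upwards [hVe ⟨eA y, hAX ⟨y, hy, rfl⟩⟩] with n hn
      rw [← hC n] at hn
      exact (hOA (C n) y).1 hn
    · rw [Set.disjoint_left]
      intro y hy hy'
      obtain ⟨n, hn, hn'⟩ := ((hVe ⟨eB y, hBX ⟨y, hy, rfl⟩⟩).and hy').exists
      rw [← hC n] at hn
      exact (hOB (C n) y).1 hn hn'

/-- Under CH, there are sets of reals `A`, `B` satisfying S₁(B_Ω,B_Γ) whose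
union does not satisfy binom(Ω,T). In particular S₁(T,Γ) ≠ S₁(Ω,Γ) and
S₁(B_T,B_Γ) ≠ S₁(B_Ω,B_Γ). -/
theorem statement18 (hCH : Cardinal.continuum = Cardinal.aleph 1) :
    ∃ A B : Set ℝ,
      S1 (BorelOmega ↥A) (BorelGamma ↥A) ∧
      S1 (BorelOmega ↥B) (BorelGamma ↥B) ∧
      ¬ Binom (OpenOmega ↥(A ∪ B)) (OpenTau ↥(A ∪ B)) ∧
      (fun X : Set ℝ => S1 (OpenTau ↥X) (OpenGamma ↥X)) ≠
        (fun X : Set ℝ => S1 (OpenOmega ↥X) (OpenGamma ↥X)) ∧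
      (fun X : Set ℝ => S1 (BorelTau ↥X) (BorelGamma ↥X)) ≠
        (fun X : Set ℝ => S1 (BorelOmega ↥X) (BorelGamma ↥X)) := by
  obtain ⟨A, B, hA, hB, hbin, hτ⟩ := main_part (ch_zero hCH)
  have hsub : ∀ V : ℕ → Set ↥(A ∪ B), (∀ n, IsOpen (V n)) →
      Set.range V ∈ BorelGamma ↥(A ∪ B) → Set.range V ∈ OpenGamma ↥(A ∪ B) := by
    intro V hV h
    refine ⟨h.1, ?_, h.2.2⟩
    rintro _ ⟨n, rfl⟩
    exact hV n
  have hno : ¬ S1 (OpenOmega ↥(A ∪ B)) (OpenGamma ↥(A ∪ B)) := by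
    intro h
    apply hbin
    intro 𝒰 h𝒰
    obtain ⟨V, hV, hV'⟩ := h (fun _ => 𝒰) (fun _ => h𝒰)
    exact ⟨Set.range V, Set.range_subset_iff.2 hV, hV'.1, hV'.2.1, gamma_tau hV'.2.2⟩
  refine ⟨A, B, hA, hB, hbin, fun heq => ?_, fun heq => ?_⟩
  · apply hno
    have h : S1 (OpenTau ↥(A ∪ B)) (OpenGamma ↥(A ∪ B)) =
        S1 (OpenOmega ↥(A ∪ B)) (OpenGamma ↥(A ∪ B)) := congrFun heq (A ∪ B)
    rw [← h]
    intro 𝒰 h𝒰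
    obtain ⟨V, hV, hV'⟩ := hτ 𝒰
      (fun n => ⟨(h𝒰 n).1, fun U hU => ((h𝒰 n).2.1 U hU).measurableSet, (h𝒰 n).2.2⟩)
    exact ⟨V, hV, hsub V (fun n => (h𝒰 n).2.1 _ (hV n)) hV'⟩
  · apply hno
    have h : S1 (BorelTau ↥(A ∪ B)) (BorelGamma ↥(A ∪ B)) =
        S1 (BorelOmega ↥(A ∪ B)) (BorelGamma ↥(A ∪ B)) := congrFun heq (A ∪ B)
    rw [h] at hτ
    intro 𝒰 h𝒰
    obtain ⟨V, hV, hV'⟩ := hτ 𝒰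
      (fun n => ⟨(h𝒰 n).1, fun U hU => ((h𝒰 n).2.1 U hU).measurableSet, (h𝒰 n).2.2⟩)
    exact ⟨V, hV, hsub V (fun n => (h𝒰 n).2.1 _ (hV n)) hV'⟩

end TauCoverPaper
end
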